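/- arXiv:2307.07539 — 6 statements merged into one kernel-verified Lean document; each statement's English description precedes it below -/
import Mathlib

section
/- Let H be a separable real Hilbert space with orthonormal (Hilbert) basis (φ_n)_{n≥1}, and for N ≥ 1 let π_N denote the orthogonal projection onto span{φ_1, …, φ_N}. Fix t ≥ 1, ρ > 0, f_1, …, f_t ∈ H, and real numbers ε_1, …, ε_t. Set S_t = Σ_{s=1}^t ε_s f_s and V_t g = Σ_{s=1}^t ⟨f_s, g⟩ f_s. Then ⟨π_N S_t, (ρ·id_H + π_N V_t π_N)^{-1} π_N S_t⟩ → ⟨S_t, (ρ·id_H + V_t)^{-1} S_t⟩ as N → ∞. -/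
open Filter
open scoped InnerProductSpace Topology

/-!
Compressing an accretive operator `V` by self-adjoint operators `π a` keeps it accretive, so the
operators `ρ + π a V π a` are bounded below uniformly in `a`. When the `π a` are uniformly bounded
and converge strongly to `1`, also `ρ + π a V π a → ρ + V` strongly, and the uniform lower bound
carries strong convergence over to the inverses.
-/

section SeminormedSpace

variable {α 𝕜 E F : Type*} [NontriviallyNormedField 𝕜] [SeminormedAddCommGroup E] [NormedSpace 𝕜 E]
  [SeminormedAddCommGroup F] [NormedSpace 𝕜 F] {l : Filter α}

theorem tendsto_apply_of_norm_le {T : α → E →L[𝕜] F} {C : ℝ} {x : α → E} {x₀ : E} {y : F}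
    (hC : ∀ a, ‖T a‖ ≤ C) (hT : Tendsto (fun a => T a x₀) l (𝓝 y)) (hx : Tendsto x l (𝓝 x₀)) :
    Tendsto (fun a => T a (x a)) l (𝓝 y) := by
  have hdiff : Tendsto (fun a => T a (x a - x₀)) l (𝓝 0) := by
    refine squeeze_zero_norm (fun a => (T a).le_of_opNorm_le (hC a) _) ?_
    simpa using (tendsto_iff_norm_sub_tendsto_zero.mp hx).const_mul C
  simpa using hdiff.add hT

theorem tendsto_ringInverse_apply_of_antilipschitzWith {A : α → E →L[𝕜] E} {A₀ : E →L[𝕜] E}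
    {K : NNReal} {x : α → E} {x₀ : E} (hK : ∀ a, AntilipschitzWith K (A a))
    (hA : ∀ a, IsUnit (A a)) (hA₀ : IsUnit A₀) (hlim : ∀ y, Tendsto (fun a => A a y) l (𝓝 (A₀ y)))
    (hx : Tendsto x l (𝓝 x₀)) :
    Tendsto (fun a => Ring.inverse (A a) (x a)) l (𝓝 (Ring.inverse A₀ x₀)) := by
  have apply_inverse {B : E →L[𝕜] E} (hB : IsUnit B) (y : E) : B (Ring.inverse B y) = y :=
    DFunLike.congr_fun (Ring.mul_inverse_cancel B hB) y
  set y₀ := Ring.inverse A₀ x₀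
  have hresidual : Tendsto (fun a => dist (x a) (A a y₀)) l (𝓝 0) := by
    simpa [y₀, apply_inverse hA₀] using hx.dist (hlim y₀)
  have hbound (a : α) : dist (Ring.inverse (A a) (x a)) y₀ ≤ K * dist (x a) (A a y₀) := by
    simpa [apply_inverse (hA a)] using (hK a).le_mul_dist (Ring.inverse (A a) (x a)) y₀
  rw [tendsto_iff_dist_tendsto_zero]
  exact squeeze_zero (fun _ => dist_nonneg) hbound (by simpa using hresidual.const_mul (K : ℝ))

end SeminormedSpace

section InnerProductSpace

open ContinuousLinearMap InnerProductSpace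

variable {α ι 𝕜 E F : Type*} [RCLike 𝕜] [NormedAddCommGroup E] [InnerProductSpace 𝕜 E]
  [NormedAddCommGroup F] [InnerProductSpace 𝕜 F] {l : Filter α}

theorem norm_sq_mul_re_le_norm_inner_smul_id_add {V : E →L[𝕜] E} (ρ : 𝕜)
    (hV : ∀ x, 0 ≤ V.reApplyInnerSelf x) (x : E) :
    ‖x‖ ^ 2 * RCLike.re ρ ≤ ‖⟪(ρ • ContinuousLinearMap.id 𝕜 E + V) x, x⟫_𝕜‖ :=
  calc ‖x‖ ^ 2 * RCLike.re ρ ≤ RCLike.re ρ * ‖x‖ ^ 2 + V.reApplyInnerSelf x := by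
        linarith [hV x]
    _ = RCLike.re ⟪(ρ • ContinuousLinearMap.id 𝕜 E + V) x, x⟫_𝕜 := by
        simp [reApplyInnerSelf_apply, inner_add_left, inner_smul_left, inner_self_eq_norm_sq,
          inner_self_im, -inner_self_eq_norm_sq_to_K]
    _ ≤ ‖⟪(ρ • ContinuousLinearMap.id 𝕜 E + V) x, x⟫_𝕜‖ := RCLike.re_le_norm _

theorem reApplyInnerSelf_adjoint_comp_comp [CompleteSpace E] [CompleteSpace F]
    (T : E →L[𝕜] F) (V : F →L[𝕜] F) (x : E) :
    ((adjoint T).comp (V.comp T)).reApplyInnerSelf x = V.reApplyInnerSelf (T x) := by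
  simp [reApplyInnerSelf_apply, adjoint_inner_left]

theorem isStarProjection_sum_rankOne [CompleteSpace E] {v : ι → E} (hv : Orthonormal 𝕜 v)
    (s : Finset ι) : IsStarProjection (∑ i ∈ s, rankOne 𝕜 (v i) (v i)) where
  isIdempotentElem := by
    classical
    ext x
    simp [orthonormal_iff_ite.mp hv]
  isSelfAdjoint := isSelfAdjoint_sum s fun i _ => (isPositive_rankOne_self (v i)).isSelfAdjoint

theorem tendsto_sum_rankOne_apply (b : HilbertBasis ι 𝕜 E) (x : E) :
    Tendsto (fun s : Finset ι => (∑ i ∈ s, rankOne 𝕜 (b i) (b i)) x) atTop (𝓝 x) := by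
  simpa [HasSum, b.repr_apply_apply] using b.hasSum_repr x

theorem truncated_quadratic_form_tendsto_general [CompleteSpace E] {π : α → E →L[𝕜] E} {C : ℝ}
    (hπ : ∀ a, IsSelfAdjoint (π a)) (hC : ∀ a, ‖π a‖ ≤ C)
    (hlim : ∀ x, Tendsto (fun a => π a x) l (𝓝 x)) {ρ : 𝕜} (hρ : 0 < RCLike.re ρ)
    {V : E →L[𝕜] E} (hV : ∀ x, 0 ≤ V.reApplyInnerSelf x) (S : E) :
    Tendsto
      (fun a => ⟪π a S,
        Ring.inverse (ρ • ContinuousLinearMap.id 𝕜 E + (π a).comp (V.comp (π a))) (π a S)⟫_𝕜)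
      l (𝓝 ⟪S, Ring.inverse (ρ • ContinuousLinearMap.id 𝕜 E + V) S⟫_𝕜) := by
  let c : NNReal := ⟨RCLike.re ρ, hρ.le⟩
  have hc : 0 < c := hρ
  have hcompression (a : α) (x : E) : 0 ≤ ((π a).comp (V.comp (π a))).reApplyInnerSelf x := by
    have h := reApplyInnerSelf_adjoint_comp_comp (π a) V x
    rw [(hπ a).adjoint_eq] at h
    exact h ▸ hV (π a x)
  have hcoercive (a : α) := norm_sq_mul_re_le_norm_inner_smul_id_add ρ (hcompression a)
  have hstrong (x : E) : Tendsto
      (fun a => (ρ • ContinuousLinearMap.id 𝕜 E + (π a).comp (V.comp (π a))) x) l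
      (𝓝 ((ρ • ContinuousLinearMap.id 𝕜 E + V) x)) :=
    have hVπ : Tendsto (fun a => V (π a x)) l (𝓝 (V x)) := (V.continuous.tendsto x).comp (hlim x)
    have hπVπ := tendsto_apply_of_norm_le hC (hlim (V x)) hVπ
    tendsto_const_nhds.add hπVπ
  exact (hlim S).inner <| tendsto_ringInverse_apply_of_antilipschitzWith
    (fun a => antilipschitz_of_forall_le_inner_map _ hc (hcoercive a))
    (fun a => isUnit_of_forall_le_norm_inner_map _ hc (hcoercive a))
    (isUnit_of_forall_le_norm_inner_map _ hc (norm_sq_mul_re_le_norm_inner_smul_id_add ρ hV))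
    hstrong (hlim S)

end InnerProductSpace

/-- The truncated self-normalized quadratic forms converge:
`⟨π_N S_t, (ρ·id + π_N V_t π_N)⁻¹ π_N S_t⟩ → ⟨S_t, (ρ·id + V_t)⁻¹ S_t⟩` as `N → ∞`,
where `S_t = Σ_{s=1}^t ε_s f_s`, `V_t g = Σ_{s=1}^t ⟨f_s, g⟩ f_s`, and `π_N` is the
orthogonal projection onto the span of the first `N` elements of an orthonormal basis. -/
theorem truncated_quadratic_form_tendsto
    {H : Type*} [NormedAddCommGroup H] [InnerProductSpace ℝ H] [CompleteSpace H]
    [SecondCountableTopology H]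
    (b : HilbertBasis ℕ ℝ H)
    (t : ℕ) (ht : 1 ≤ t) (ρ : ℝ) (hρ : 0 < ρ) (f : Fin t → H) (ε : Fin t → ℝ)
    -- `π_N f = Σ_{n=1}^N ⟨f, φ_n⟩ φ_n`, the orthogonal projection onto the first `N`
    -- basis vectors
    (π : ℕ → H →L[ℝ] H)
    (hπ : ∀ N, π N = ∑ n ∈ Finset.range N, (innerSL ℝ (b n)).smulRight (b n))
    -- `S_t = Σ_{s=1}^t ε_s f_s`
    (S : H) (hS : S = ∑ s : Fin t, ε s • f s)
    -- `V_t g = Σ_{s=1}^t ⟨f_s, g⟩ f_s`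
    (V : H →L[ℝ] H) (hV : V = ∑ s : Fin t, (innerSL ℝ (f s)).smulRight (f s)) :
    Tendsto
      (fun N => ⟪π N S,
        Ring.inverse (ρ • ContinuousLinearMap.id ℝ H + (π N).comp (V.comp (π N)))
          (π N S)⟫_ℝ)
      atTop
      (𝓝 ⟪S, Ring.inverse (ρ • ContinuousLinearMap.id ℝ H + V) S⟫_ℝ) := by
  obtain ⟨rfl, rfl⟩ := And.intro (funext hπ) hV
  have hproj (N : ℕ) := isStarProjection_sum_rankOne b.orthonormal (Finset.range N)
  exact truncated_quadratic_form_tendsto_general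
    (fun N => (hproj N).isSelfAdjoint) (fun N => (hproj N).norm_le)
    (fun x => (tendsto_sum_rankOne_apply b x).comp tendsto_finset_range) hρ
    (ContinuousLinearMap.isPositive_sum _ fun s _ =>
      InnerProductSpace.isPositive_rankOne_self (f s)).2 S
end

section
/- Let H be a real Hilbert space, fix t ≥ 1, ρ > 0, f_1, …, f_t ∈ H, and ε = (ε_1, …, ε_t) ∈ ℝ^t. Set S_t = Σ_{s=1}^t ε_s f_s, let V_t be the operator g ↦ Σ_{s=1}^t ⟨f_s, g⟩ f_s, and let K_t ∈ ℝ^{t×t} be the Gram matrix (K_t)_{ij} = ⟨f_i, f_j⟩. Then ⟨S_t, (ρ·id_H + V_t)^{-1} S_t⟩ = εᵀ (ρ^{-1}K_t)(I_t + ρ^{-1}K_t)^{-1} ε; in particular, if K_t is invertible, this quantity equals εᵀ (I_t + ρ K_t^{-1})^{-1} ε. -/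
open scoped InnerProductSpace Matrix

/-!
Let `A c = ∑ s, c s • f s` be the synthesis operator of the family and `B g = (⟪f s, g⟫)ₛ` its
analysis operator, so that `V = A B`, `K = B A` and `S = A ε`. From `(ρ + A B) A = A (ρ + B A)`
one gets `(ρ + V)⁻¹ S = A (ρ + K)⁻¹ ε`, and pairing this with `S = A ε` leaves only the Gram
matrix. Invertibility passes from `1 + ρ⁻¹ K` to `ρ + V` by an explicit formula for the inverse.
-/

section PushThrough

variable {R E F : Type*} [AddCommMonoid E] [TopologicalSpace E]

theorem ringInverse_apply_eq_iff [Semiring R] [Module R E] {T : E →L[R] E} (hT : IsUnit T)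
    {x y : E} : Ring.inverse T y = x ↔ T x = y := by
  constructor
  · rintro rfl
    exact DFunLike.congr_fun (Ring.mul_inverse_cancel T hT) y
  · rintro rfl
    exact DFunLike.congr_fun (Ring.inverse_mul_cancel T hT) x

-- With `D = (1 + BA)⁻¹`, the inverse of `1 + AB` is `1 - A D B` (the Woodbury identity).
theorem isUnit_one_add_comp_swap [Ring R] [Module R E] [ContinuousAdd E] [AddCommGroup F]
    [Module R F] [TopologicalSpace F] [IsTopologicalAddGroup F] {A : E →L[R] F} {B : F →L[R] E}
    (h : IsUnit (1 + B ∘L A)) : IsUnit (1 + A ∘L B) := by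
  obtain ⟨u, hu⟩ := h
  set D : E →L[R] E := ↑u⁻¹
  have right_inv (x : E) : D x + B (A (D x)) = x := by
    simpa [hu] using DFunLike.congr_fun u.mul_inv x
  have left_inv (x : E) : D x + D (B (A x)) = x := by
    simpa [hu] using DFunLike.congr_fun u.inv_mul x
  refine isUnit_iff_exists.mpr ⟨1 - A ∘L D ∘L B, ?_, ?_⟩
  · ext y
    have hy : A (D (B y)) + A (B (A (D (B y)))) = A (B y) := by rw [← map_add, right_inv]
    calc (y - A (D (B y))) + A (B (y - A (D (B y))))
        = y + A (B y) - (A (D (B y)) + A (B (A (D (B y))))) := by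
          rw [show A (B (y - A (D (B y)))) = _ from map_sub (A ∘L B) _ _,
            ContinuousLinearMap.comp_apply, ContinuousLinearMap.comp_apply]
          abel
      _ = y := by rw [hy, add_sub_cancel_right]
  · ext y
    have hy : A (D (B y)) + A (D (B (A (B y)))) = A (B y) := by rw [← map_add, left_inv]
    calc (y + A (B y)) - A (D (B (y + A (B y))))
        = y + A (B y) - (A (D (B y)) + A (D (B (A (B y))))) := by simp only [map_add]
      _ = y := by rw [hy, add_sub_cancel_right]

end PushThrough

section Matrix

open scoped ComplexOrder

variable {ι : Type*} [Fintype ι] [DecidableEq ι]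

theorem inv_smul_mul_inv_one_add_inv_smul {𝕜 : Type*} [Field 𝕜] {ρ : 𝕜} (hρ : ρ ≠ 0)
    {K : Matrix ι ι 𝕜} (hK : IsUnit K.det) :
    (ρ⁻¹ • K) * (1 + ρ⁻¹ • K)⁻¹ = (1 + ρ • K⁻¹)⁻¹ := by
  have factor : 1 + ρ • K⁻¹ = (1 + ρ⁻¹ • K) * (ρ • K⁻¹) := by
    rw [add_mul, one_mul, smul_mul_smul_comm, inv_mul_cancel₀ hρ, one_smul,
      Matrix.mul_nonsing_inv K hK, add_comm]
  have inv_smul_inv : (ρ • K⁻¹)⁻¹ = ρ⁻¹ • K := by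
    refine Matrix.inv_eq_right_inv ?_
    rw [smul_mul_smul_comm, mul_inv_cancel₀ hρ, one_smul, Matrix.nonsing_inv_mul K hK]
  rw [factor, Matrix.mul_inv_rev, inv_smul_inv]

theorem isUnit_one_add_smul_gram {𝕜 H : Type*} [RCLike 𝕜] [SeminormedAddCommGroup H]
    [InnerProductSpace 𝕜 H] (f : ι → H) {c : 𝕜} (hc : 0 ≤ c) :
    IsUnit (1 + c • Matrix.gram 𝕜 f) :=
  (Matrix.PosDef.one.add_posSemidef ((Matrix.posSemidef_gram 𝕜 f).smul hc)).isUnit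

end Matrix

section Frame

variable {𝕜 H ι : Type*} [RCLike 𝕜] [SeminormedAddCommGroup H] [InnerProductSpace 𝕜 H]

variable (𝕜) in
/-- The analysis operator `g ↦ (⟪f s, g⟫)ₛ` of a family of vectors. -/
noncomputable def analysisOperator (f : ι → H) : H →L[𝕜] (ι → 𝕜) :=
  ContinuousLinearMap.pi fun s ↦ innerSL 𝕜 (f s)

@[simp]
theorem analysisOperator_apply (f : ι → H) (g : H) (s : ι) :
    analysisOperator 𝕜 f g s = ⟪f s, g⟫_𝕜 := rfl

variable [Fintype ι]

variable (𝕜) in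
/-- The synthesis operator `c ↦ ∑ s, c s • f s` of a finite family of vectors. The coefficient
space carries the product topology, so that matrices act on it directly. -/
noncomputable def synthesisOperator (f : ι → H) : (ι → 𝕜) →L[𝕜] H :=
  ∑ s, (ContinuousLinearMap.proj s).smulRight (f s)

@[simp]
theorem synthesisOperator_apply (f : ι → H) (c : ι → 𝕜) :
    synthesisOperator 𝕜 f c = ∑ s, c s • f s := by
  simp [synthesisOperator]

theorem analysisOperator_synthesisOperator (f : ι → H) (c : ι → 𝕜) :
    analysisOperator 𝕜 f (synthesisOperator 𝕜 f c) = Matrix.gram 𝕜 f *ᵥ c := by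
  ext s
  simp [Matrix.mulVec, dotProduct, inner_sum, inner_smul_right, mul_comm]

variable (𝕜) in
/-- The frame operator of a finite family of vectors, synthesis after analysis. -/
noncomputable def frameOperator (f : ι → H) : H →L[𝕜] H :=
  synthesisOperator 𝕜 f ∘L analysisOperator 𝕜 f

theorem frameOperator_eq_sum (f : ι → H) :
    frameOperator 𝕜 f = ∑ s, (innerSL 𝕜 (f s)).smulRight (f s) := by
  ext g
  simp [frameOperator]

theorem frameOperator_synthesisOperator (f : ι → H) (c : ι → 𝕜) :
    frameOperator 𝕜 f (synthesisOperator 𝕜 f c) =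
      synthesisOperator 𝕜 f (Matrix.gram 𝕜 f *ᵥ c) :=
  congrArg (synthesisOperator 𝕜 f) (analysisOperator_synthesisOperator f c)

theorem inner_synthesisOperator_synthesisOperator (f : ι → H) (c d : ι → 𝕜) :
    ⟪synthesisOperator 𝕜 f c, synthesisOperator 𝕜 f d⟫_𝕜 = star c ⬝ᵥ Matrix.gram 𝕜 f *ᵥ d := by
  rw [Matrix.star_dotProduct_gram_mulVec, synthesisOperator_apply, synthesisOperator_apply]

variable [DecidableEq ι] {f : ι → H} {ρ : 𝕜}

theorem isUnit_smul_id_add_frameOperator (hρ : ρ ≠ 0)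
    (hM : IsUnit (1 + ρ⁻¹ • Matrix.gram 𝕜 f)) :
    IsUnit (ρ • ContinuousLinearMap.id 𝕜 H + frameOperator 𝕜 f) := by
  have gram_operator : 1 + analysisOperator 𝕜 f ∘L (ρ⁻¹ • synthesisOperator 𝕜 f) =
      Module.End.toContinuousLinearMap (ι → 𝕜)
        (Matrix.toLinAlgEquiv' (1 + ρ⁻¹ • Matrix.gram 𝕜 f)) := by
    ext1 c
    change c + analysisOperator 𝕜 f (ρ⁻¹ • synthesisOperator 𝕜 f c) =
      (1 + ρ⁻¹ • Matrix.gram 𝕜 f) *ᵥ c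
    rw [map_smul, analysisOperator_synthesisOperator, Matrix.add_mulVec, Matrix.one_mulVec,
      Matrix.smul_mulVec]
  have scaled : ρ • ContinuousLinearMap.id 𝕜 H + frameOperator 𝕜 f =
      Units.mk0 ρ hρ • (1 + (ρ⁻¹ • synthesisOperator 𝕜 f) ∘L analysisOperator 𝕜 f) := by
    rw [Units.smul_mk0, smul_add, ContinuousLinearMap.smul_comp, smul_inv_smul₀ hρ]
    rfl
  rw [scaled, isUnit_smul_iff]
  apply isUnit_one_add_comp_swap
  rw [gram_operator]
  exact (hM.map Matrix.toLinAlgEquiv').map (Module.End.toContinuousLinearMap (ι → 𝕜))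

theorem ringInverse_smul_id_add_frameOperator_synthesisOperator (hρ : ρ ≠ 0)
    (hM : IsUnit (1 + ρ⁻¹ • Matrix.gram 𝕜 f)) (c : ι → 𝕜) :
    Ring.inverse (ρ • ContinuousLinearMap.id 𝕜 H + frameOperator 𝕜 f) (synthesisOperator 𝕜 f c) =
      ρ⁻¹ • synthesisOperator 𝕜 f ((1 + ρ⁻¹ • Matrix.gram 𝕜 f)⁻¹ *ᵥ c) := by
  rw [ringInverse_apply_eq_iff (isUnit_smul_id_add_frameOperator hρ hM)]
  set a := (1 + ρ⁻¹ • Matrix.gram 𝕜 f)⁻¹ *ᵥ c with ha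
  have a_solves : a + ρ⁻¹ • Matrix.gram 𝕜 f *ᵥ a = c := by
    calc a + ρ⁻¹ • Matrix.gram 𝕜 f *ᵥ a = (1 + ρ⁻¹ • Matrix.gram 𝕜 f) *ᵥ a := by
          rw [Matrix.add_mulVec, Matrix.one_mulVec, Matrix.smul_mulVec]
      _ = c := by
          rw [ha, Matrix.mulVec_mulVec,
            Matrix.mul_nonsing_inv _ ((Matrix.isUnit_iff_isUnit_det _).mp hM), Matrix.one_mulVec]
  calc (ρ • ContinuousLinearMap.id 𝕜 H + frameOperator 𝕜 f) (ρ⁻¹ • synthesisOperator 𝕜 f a)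
      = ρ • ρ⁻¹ • synthesisOperator 𝕜 f a +
          ρ⁻¹ • frameOperator 𝕜 f (synthesisOperator 𝕜 f a) := by
        rw [← map_smul (frameOperator 𝕜 f)]
        rfl
    _ = synthesisOperator 𝕜 f (a + ρ⁻¹ • Matrix.gram 𝕜 f *ᵥ a) := by
        rw [smul_inv_smul₀ hρ, frameOperator_synthesisOperator, map_add, map_smul]
    _ = synthesisOperator 𝕜 f c := by rw [a_solves]

end Frame

theorem self_normalized_norm_kernel_trick_general
    {𝕜 H ι : Type*} [RCLike 𝕜] [SeminormedAddCommGroup H] [InnerProductSpace 𝕜 H]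
    [Fintype ι] [DecidableEq ι] {ρ : 𝕜} (hρ : ρ ≠ 0) {f : ι → H} (ε : ι → 𝕜)
    {S : H} (hS : S = ∑ s, ε s • f s)
    {V : H →L[𝕜] H} (hV : V = ∑ s, (innerSL 𝕜 (f s)).smulRight (f s))
    {K : Matrix ι ι 𝕜} (hK : K = Matrix.gram 𝕜 f) (hM : IsUnit (1 + ρ⁻¹ • K)) :
    ⟪S, Ring.inverse (ρ • ContinuousLinearMap.id 𝕜 H + V) S⟫_𝕜 =
        star ε ⬝ᵥ (((ρ⁻¹ • K) * (1 + ρ⁻¹ • K)⁻¹) *ᵥ ε) ∧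
      (IsUnit K.det →
        ⟪S, Ring.inverse (ρ • ContinuousLinearMap.id 𝕜 H + V) S⟫_𝕜 =
          star ε ⬝ᵥ ((1 + ρ • K⁻¹)⁻¹ *ᵥ ε)) := by
  rw [← synthesisOperator_apply] at hS
  rw [← frameOperator_eq_sum] at hV
  subst hS hV hK
  have kernel_form :
      ⟪synthesisOperator 𝕜 f ε, Ring.inverse (ρ • ContinuousLinearMap.id 𝕜 H + frameOperator 𝕜 f)
        (synthesisOperator 𝕜 f ε)⟫_𝕜 =
      star ε ⬝ᵥ (((ρ⁻¹ • Matrix.gram 𝕜 f) * (1 + ρ⁻¹ • Matrix.gram 𝕜 f)⁻¹) *ᵥ ε) := by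
    rw [ringInverse_smul_id_add_frameOperator_synthesisOperator hρ hM, inner_smul_right,
      inner_synthesisOperator_synthesisOperator, ← Matrix.mulVec_mulVec, Matrix.smul_mulVec,
      dotProduct_smul, smul_eq_mul]
  refine ⟨kernel_form, fun hdet ↦ ?_⟩
  rw [kernel_form, inv_smul_mul_inv_one_add_inv_smul hρ hdet]

/-- Kernel-trick identity for the self-normalized quadratic form:
`⟨S_t, (ρ·id + V_t)⁻¹ S_t⟩ = εᵀ (ρ⁻¹K_t)(I_t + ρ⁻¹K_t)⁻¹ ε`, and if the Gram matrix `K_t`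
is invertible this also equals `εᵀ (I_t + ρ K_t⁻¹)⁻¹ ε`. -/
theorem self_normalized_norm_kernel_trick
    {H : Type*} [NormedAddCommGroup H] [InnerProductSpace ℝ H] [CompleteSpace H]
    (t : ℕ) (ht : 1 ≤ t) (ρ : ℝ) (hρ : 0 < ρ) (f : Fin t → H) (ε : Fin t → ℝ)
    -- `S_t = Σ_{s=1}^t ε_s f_s`
    (S : H) (hS : S = ∑ s : Fin t, ε s • f s)
    -- `V_t g = Σ_{s=1}^t ⟨f_s, g⟩ f_s`
    (V : H →L[ℝ] H) (hV : V = ∑ s : Fin t, (innerSL ℝ (f s)).smulRight (f s))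
    -- Gram matrix `(K_t)_{ij} = ⟨f_i, f_j⟩`
    (K : Matrix (Fin t) (Fin t) ℝ) (hK : ∀ i j, K i j = ⟪f i, f j⟫_ℝ) :
    ⟪S, Ring.inverse (ρ • ContinuousLinearMap.id ℝ H + V) S⟫_ℝ =
        ε ⬝ᵥ (((ρ⁻¹ • K) * (1 + ρ⁻¹ • K)⁻¹) *ᵥ ε) ∧
      (IsUnit K.det →
        ⟪S, Ring.inverse (ρ • ContinuousLinearMap.id ℝ H + V) S⟫_ℝ =
          ε ⬝ᵥ ((1 + ρ • K⁻¹)⁻¹ *ᵥ ε)) := by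
  obtain rfl : K = Matrix.gram ℝ f := Matrix.ext hK
  simpa only [star_trivial] using self_normalized_norm_kernel_trick_general hρ.ne' ε hS hV rfl
    (isUnit_one_add_smul_gram f (inv_nonneg.mpr hρ.le))
end

section
/- Let H be a real Hilbert space, fix t ≥ 1, ρ > 0, features f_1, …, f_t ∈ H, noise values ε_1, …, ε_t ∈ ℝ, and a target f* ∈ H. Set Y_s = ⟨f*, f_s⟩ + ε_s, let V_t be the operator g ↦ Σ_{s=1}^t ⟨f_s, g⟩ f_s, S_t = Σ_{s=1}^t ε_s f_s, and define the ridge estimator f̂_t = (ρ·id_H + V_t)^{-1} ( Σ_{s=1}^t Y_s f_s ). Then f̂_t − f* = (ρ·id_H + V_t)^{-1} S_t − ρ (ρ·id_H + V_t)^{-1} f*, and consequently ⟨f̂_t − f*, (ρ·id_H + V_t)(f̂_t − f*)⟩^{1/2} ≤ ⟨S_t, (ρ·id_H + V_t)^{-1} S_t⟩^{1/2} + ρ^{1/2} ‖f*‖_H. -/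
open scoped InnerProductSpace

/-!
Put `A = ρ·id + V`, and let `‖x‖_A = ⟨x, A x⟩^{1/2}` be its energy seminorm. Since the observations
combine to `Σ Y_s f_s = V f* + S = A f* - ρ f* + S`, applying `A⁻¹` gives the error formula.
The bound is the triangle inequality for `‖·‖_A`: the noise part `A⁻¹ S` has energy
`⟨S, A⁻¹ S⟩^{1/2}`, while coercivity `ρ ‖x‖² ≤ ⟨x, A x⟩` yields `ρ ⟨x, A x⟩ ≤ ‖A x‖²`, which at
`x = A⁻¹ f*` bounds the energy of the bias part `ρ A⁻¹ f*` by `ρ^{1/2} ‖f*‖`. Coercivity also makes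
`A` injective and bounded below, and `A` is onto because `V` has finite rank.
-/

namespace RidgeRegression

open scoped NNReal

section Invertibility

section InverseApply

variable {R M : Type*} [Semiring R] [TopologicalSpace M] [AddCommMonoid M] [Module R M]
  {A : M →L[R] M}

theorem apply_inverse_apply (hA : IsUnit A) (x : M) : A (Ring.inverse A x) = x :=
  DFunLike.congr_fun (Ring.mul_inverse_cancel A hA) x

theorem inverse_apply_apply (hA : IsUnit A) (x : M) : Ring.inverse A (A x) = x :=
  DFunLike.congr_fun (Ring.inverse_mul_cancel A hA) x

end InverseApply

theorem surjective_smul_id_add_of_injective {K M : Type*} [Field K] [AddCommGroup M] [Module K M]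
    {T : M →ₗ[K] M} [FiniteDimensional K T.range] {c : K} (hc : c ≠ 0)
    (hinj : Function.Injective (c • LinearMap.id + T : M →ₗ[K] M)) :
    Function.Surjective (c • LinearMap.id + T : M →ₗ[K] M) := by
  set A : M →ₗ[K] M := c • LinearMap.id + T
  have hA : ∀ x, A x = c • x + T x := fun _ ↦ rfl
  have hmaps : ∀ y ∈ T.range, A y ∈ T.range := fun y hy ↦
    add_mem (T.range.smul_mem c hy) (T.mem_range_self y)
  have hsurj : Function.Surjective (A.restrict hmaps) :=
    LinearMap.injective_iff_surjective.mp fun y z hyz ↦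
      Subtype.ext (hinj (congrArg Subtype.val hyz))
  intro g
  -- Solve `A y = T g` inside the finite-dimensional range of `T`: then `A (g - y) = c • g`.
  obtain ⟨⟨y, _⟩, hy⟩ := hsurj ⟨T g, T.mem_range_self g⟩
  have hy : A y = T g := congrArg Subtype.val hy
  refine ⟨c⁻¹ • (g - y), ?_⟩
  rw [map_smul, map_sub, hA g, hy, add_sub_cancel_right, inv_smul_smul₀ hc]

theorem isUnit_of_surjective_of_antilipschitzWith {𝕜 E : Type*} [NontriviallyNormedField 𝕜]
    [NormedAddCommGroup E] [NormedSpace 𝕜 E] {A : E →L[𝕜] E} {C : ℝ≥0}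
    (hsurj : Function.Surjective A) (hanti : AntilipschitzWith C A) : IsUnit A := by
  let e : E ≃ₗ[𝕜] E := LinearEquiv.ofBijective A.toLinearMap ⟨hanti.injective, hsurj⟩
  have hcont : Continuous e.symm := (hanti.to_rightInverse e.apply_symm_apply).continuous
  let e' : E ≃L[𝕜] E := ⟨e, A.continuous, hcont⟩
  exact e'.toUnit.isUnit

end Invertibility

variable {𝕜 E : Type*} [RCLike 𝕜] [NormedAddCommGroup E] [InnerProductSpace 𝕜 E]

section Coercive

variable {A : E →L[𝕜] E} {ρ : ℝ}

theorem antilipschitzWith_of_coercive (hρ : 0 < ρ)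
    (hA : ∀ x, ρ * ‖x‖ ^ 2 ≤ RCLike.re ⟪x, A x⟫_𝕜) : AntilipschitzWith (⟨ρ, hρ.le⟩ : ℝ≥0)⁻¹ A :=
  A.antilipschitz_of_forall_le_inner_map hρ fun x ↦
    calc ‖x‖ ^ 2 * ρ = ρ * ‖x‖ ^ 2 := mul_comm _ _
      _ ≤ RCLike.re ⟪x, A x⟫_𝕜 := hA x
      _ ≤ ‖⟪x, A x⟫_𝕜‖ := RCLike.re_le_norm _
      _ = ‖⟪A x, x⟫_𝕜‖ := norm_inner_symm _ _

theorem mul_norm_le_norm_apply_of_coercive (hρ : 0 < ρ)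
    (hA : ∀ x, ρ * ‖x‖ ^ 2 ≤ RCLike.re ⟪x, A x⟫_𝕜) (x : E) : ρ * ‖x‖ ≤ ‖A x‖ :=
  (le_inv_mul_iff₀ hρ).mp <|
    ZeroHomClass.bound_of_antilipschitz A (antilipschitzWith_of_coercive hρ hA) x

theorem mul_re_inner_apply_le_norm_sq_of_coercive (hρ : 0 < ρ)
    (hA : ∀ x, ρ * ‖x‖ ^ 2 ≤ RCLike.re ⟪x, A x⟫_𝕜) (x : E) :
    ρ * RCLike.re ⟪x, A x⟫_𝕜 ≤ ‖A x‖ ^ 2 :=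
  calc ρ * RCLike.re ⟪x, A x⟫_𝕜 ≤ ρ * (‖x‖ * ‖A x‖) := by gcongr; exact re_inner_le_norm x (A x)
    _ = ρ * ‖x‖ * ‖A x‖ := (mul_assoc _ _ _).symm
    _ ≤ ‖A x‖ * ‖A x‖ := by gcongr; exact mul_norm_le_norm_apply_of_coercive hρ hA x
    _ = ‖A x‖ ^ 2 := (sq _).symm

end Coercive

section Energy

/-- The semidefinite inner product `⟨x, T y⟩` induced by a positive operator `T`. -/
abbrev energyCore {T : E →ₗ[𝕜] E} (hT : T.IsPositive) : PreInnerProductSpace.Core 𝕜 E where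
  inner x y := ⟪x, T y⟫_𝕜
  conj_inner_symm x y := by rw [inner_conj_symm, hT.isSymmetric]
  re_inner_nonneg := hT.re_inner_nonneg_right
  add_left x y z := inner_add_left x y (T z)
  smul_left x y c := inner_smul_left x (T y) c

/-- The energy seminorm `x ↦ ⟨x, T x⟩^{1/2}` of a positive operator `T`. On a Hilbert space it is
`x ↦ ‖T^{1/2} x‖`; this encoding needs no square root of `T`. -/
noncomputable def energySeminorm {T : E →ₗ[𝕜] E} (hT : T.IsPositive) : Seminorm 𝕜 E :=
  @normSeminorm 𝕜 E _ (InnerProductSpace.Core.toSeminormedAddCommGroup (c := energyCore hT))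
    (InnerProductSpace.Core.toNormedSpace (c := energyCore hT))

theorem energySeminorm_apply {T : E →ₗ[𝕜] E} (hT : T.IsPositive) (x : E) :
    energySeminorm hT x = √(RCLike.re ⟪x, T x⟫_𝕜) :=
  rfl

theorem energySeminorm_inverse_apply {A : E →L[𝕜] E} (hA : A.IsPositive) (hunit : IsUnit A)
    (y : E) :
    energySeminorm hA.toLinearMap (Ring.inverse A y) = √(RCLike.re ⟪y, Ring.inverse A y⟫_𝕜) := by
  rw [energySeminorm_apply, ContinuousLinearMap.coe_coe, apply_inverse_apply hunit,
    inner_re_symm]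

theorem mul_energySeminorm_inverse_apply_le {A : E →L[𝕜] E} {ρ : ℝ} (hρ : 0 < ρ)
    (hA : A.IsPositive) (hunit : IsUnit A) (hcoer : ∀ x, ρ * ‖x‖ ^ 2 ≤ RCLike.re ⟪x, A x⟫_𝕜)
    (y : E) : ρ * energySeminorm hA.toLinearMap (Ring.inverse A y) ≤ √ρ * ‖y‖ := by
  have henergy : √ρ * energySeminorm hA.toLinearMap (Ring.inverse A y) ≤ ‖y‖ := by
    rw [energySeminorm_apply, ← Real.sqrt_mul hρ.le]
    refine (Real.sqrt_le_left (norm_nonneg y)).mpr ?_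
    simpa only [ContinuousLinearMap.coe_coe, apply_inverse_apply hunit] using
      mul_re_inner_apply_le_norm_sq_of_coercive hρ hcoer (Ring.inverse A y)
  calc ρ * energySeminorm hA.toLinearMap (Ring.inverse A y)
      = √ρ * (√ρ * energySeminorm hA.toLinearMap (Ring.inverse A y)) := by
        rw [← mul_assoc, Real.mul_self_sqrt hρ.le]
    _ ≤ √ρ * ‖y‖ := by gcongr

end Energy

section RidgeOperator

/-- The regularized operator `ρ·id + V` inverted in ridge regression. -/
noncomputable def ridgeOperator (ρ : ℝ) (V : E →L[𝕜] E) : E →L[𝕜] E :=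
  (ρ : 𝕜) • ContinuousLinearMap.id 𝕜 E + V

variable {ρ : ℝ} {V : E →L[𝕜] E}

theorem ridgeOperator_apply (x : E) : ridgeOperator ρ V x = (ρ : 𝕜) • x + V x :=
  rfl

theorem isPositive_ridgeOperator (hρ : 0 ≤ ρ) (hV : V.IsPositive) :
    (ridgeOperator ρ V).IsPositive :=
  (ContinuousLinearMap.isPositive_id.smul_of_nonneg (RCLike.ofReal_nonneg.mpr hρ)).add hV

theorem mul_norm_sq_le_re_inner_ridgeOperator (hV : V.IsPositive) (x : E) :
    ρ * ‖x‖ ^ 2 ≤ RCLike.re ⟪x, ridgeOperator ρ V x⟫_𝕜 := by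
  rw [ridgeOperator_apply, inner_add_right, map_add, inner_smul_right, RCLike.re_ofReal_mul,
    inner_self_eq_norm_sq]
  exact le_add_of_nonneg_right (hV.re_inner_nonneg_right x)

theorem isUnit_ridgeOperator [FiniteDimensional 𝕜 V.range] (hρ : 0 < ρ) (hV : V.IsPositive) :
    IsUnit (ridgeOperator ρ V) :=
  have hanti := antilipschitzWith_of_coercive hρ (mul_norm_sq_le_re_inner_ridgeOperator hV)
  isUnit_of_surjective_of_antilipschitzWith
    (surjective_smul_id_add_of_injective (T := V.toLinearMap)
      (RCLike.ofReal_ne_zero.mpr hρ.ne') hanti.injective)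
    hanti

theorem inverse_ridgeOperator_apply_add_sub (hunit : IsUnit (ridgeOperator ρ V)) (g S : E) :
    Ring.inverse (ridgeOperator ρ V) (V g + S) - g =
      Ring.inverse (ridgeOperator ρ V) S - (ρ : 𝕜) • Ring.inverse (ridgeOperator ρ V) g := by
  have hVg : V g = ridgeOperator ρ V g - (ρ : 𝕜) • g := by
    rw [ridgeOperator_apply, add_sub_cancel_left]
  rw [hVg, map_add, map_sub, map_smul, inverse_apply_apply hunit]
  abel

theorem energySeminorm_inverse_ridgeOperator_sub_le (hρ : 0 < ρ) (hV : V.IsPositive)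
    (hunit : IsUnit (ridgeOperator ρ V)) (g S : E) :
    energySeminorm (isPositive_ridgeOperator hρ.le hV).toLinearMap
        (Ring.inverse (ridgeOperator ρ V) S - (ρ : 𝕜) • Ring.inverse (ridgeOperator ρ V) g) ≤
      √(RCLike.re ⟪S, Ring.inverse (ridgeOperator ρ V) S⟫_𝕜) + √ρ * ‖g‖ := by
  have hA := isPositive_ridgeOperator hρ.le hV
  refine (map_sub_le_add _ _ _).trans (add_le_add ?_ ?_)
  · exact (energySeminorm_inverse_apply hA hunit S).le
  · rw [map_smul_eq_mul, RCLike.norm_of_nonneg hρ.le]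
    exact mul_energySeminorm_inverse_apply_le hρ hA hunit
      (mul_norm_sq_le_re_inner_ridgeOperator hV) g

end RidgeOperator

section Features

variable {ι : Type*} [Fintype ι]

variable (𝕜) in
/-- The operator `g ↦ Σ_s ⟨f_s, g⟩ f_s` attached to a finite family of features `f`. -/
noncomputable def featureOperator (f : ι → E) : E →L[𝕜] E :=
  ∑ s, (innerSL 𝕜 (f s)).smulRight (f s)

theorem featureOperator_apply (f : ι → E) (g : E) :
    featureOperator 𝕜 f g = ∑ s, ⟪f s, g⟫_𝕜 • f s := by
  simp [featureOperator]

theorem isPositive_featureOperator (f : ι → E) : (featureOperator 𝕜 f).IsPositive :=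
  ContinuousLinearMap.isPositive_sum _ fun s _ ↦ InnerProductSpace.isPositive_rankOne_self (f s)

instance finiteDimensional_range_featureOperator (f : ι → E) :
    FiniteDimensional 𝕜 (featureOperator 𝕜 f).range := by
  have : FiniteDimensional 𝕜 (Submodule.span 𝕜 (Set.range f)) :=
    FiniteDimensional.span_of_finite 𝕜 (Set.finite_range f)
  refine Submodule.finiteDimensional_of_le (S₂ := Submodule.span 𝕜 (Set.range f)) ?_
  rintro _ ⟨g, rfl⟩
  rw [ContinuousLinearMap.coe_coe, featureOperator_apply]
  exact sum_mem fun s _ ↦ Submodule.smul_mem _ _ (Submodule.subset_span (Set.mem_range_self s))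

theorem sum_smul_eq_featureOperator_apply_add (f : ι → E) (ε : ι → 𝕜) (g : E) :
    ∑ s, (⟪f s, g⟫_𝕜 + ε s) • f s = featureOperator 𝕜 f g + ∑ s, ε s • f s := by
  simp only [featureOperator_apply, add_smul, Finset.sum_add_distrib]

end Features

end RidgeRegression

open RidgeRegression in
theorem ridge_error_decomposition_general
    {𝕜 H ι : Type*} [RCLike 𝕜] [NormedAddCommGroup H] [InnerProductSpace 𝕜 H] [Fintype ι]
    {ρ : ℝ} (hρ : 0 < ρ) (f : ι → H) (ε : ι → 𝕜) (fstar : H)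
    {Y : ι → 𝕜} (hY : ∀ s, Y s = ⟪f s, fstar⟫_𝕜 + ε s)
    {V : H →L[𝕜] H} (hV : V = featureOperator 𝕜 f)
    {S : H} (hS : S = ∑ s, ε s • f s)
    {fhat : H} (hfhat : fhat = Ring.inverse (ridgeOperator ρ V) (∑ s, Y s • f s)) :
    fhat - fstar =
        Ring.inverse (ridgeOperator ρ V) S - (ρ : 𝕜) • Ring.inverse (ridgeOperator ρ V) fstar ∧
      √(RCLike.re ⟪fhat - fstar, ridgeOperator ρ V (fhat - fstar)⟫_𝕜) ≤
        √(RCLike.re ⟪S, Ring.inverse (ridgeOperator ρ V) S⟫_𝕜) + √ρ * ‖fstar‖ := by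
  have hpos : V.IsPositive := hV ▸ isPositive_featureOperator f
  have hunit : IsUnit (ridgeOperator ρ V) :=
    hV ▸ isUnit_ridgeOperator hρ (isPositive_featureOperator f)
  have hdata : ∑ s, Y s • f s = V fstar + S := by
    simp only [hY, hV, hS, sum_smul_eq_featureOperator_apply_add]
  have herror : fhat - fstar =
      Ring.inverse (ridgeOperator ρ V) S - (ρ : 𝕜) • Ring.inverse (ridgeOperator ρ V) fstar := by
    rw [hfhat, hdata, inverse_ridgeOperator_apply_add_sub hunit]
  refine ⟨herror, ?_⟩
  rw [herror]
  exact energySeminorm_inverse_ridgeOperator_sub_le hρ hpos hunit fstar S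

/-- Decomposition of the ridge-estimation error and the resulting bound:
`f̂_t − f* = (ρ·id + V_t)⁻¹ S_t − ρ (ρ·id + V_t)⁻¹ f*`, and consequently
`‖(ρ·id + V_t)^{1/2}(f̂_t − f*)‖ ≤ ‖(ρ·id + V_t)^{-1/2} S_t‖ + ρ^{1/2} ‖f*‖`. -/
theorem ridge_error_decomposition
    {H : Type*} [NormedAddCommGroup H] [InnerProductSpace ℝ H] [CompleteSpace H]
    (t : ℕ) (ht : 1 ≤ t) (ρ : ℝ) (hρ : 0 < ρ)
    (f : Fin t → H) (ε : Fin t → ℝ) (fstar : H)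
    -- observations `Y_s = ⟨f*, f_s⟩ + ε_s`
    (Y : Fin t → ℝ) (hY : ∀ s, Y s = ⟪fstar, f s⟫_ℝ + ε s)
    -- `V_t g = Σ_{s=1}^t ⟨f_s, g⟩ f_s`
    (V : H →L[ℝ] H) (hV : V = ∑ s : Fin t, (innerSL ℝ (f s)).smulRight (f s))
    -- `S_t = Σ_{s=1}^t ε_s f_s`
    (S : H) (hS : S = ∑ s : Fin t, ε s • f s)
    -- ridge estimator `f̂_t = (ρ·id + V_t)⁻¹ (Σ_{s=1}^t Y_s f_s)`
    (fhat : H)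
    (hfhat : fhat =
      Ring.inverse (ρ • ContinuousLinearMap.id ℝ H + V) (∑ s : Fin t, Y s • f s)) :
    fhat - fstar =
        Ring.inverse (ρ • ContinuousLinearMap.id ℝ H + V) S -
          ρ • Ring.inverse (ρ • ContinuousLinearMap.id ℝ H + V) fstar ∧
      Real.sqrt ⟪fhat - fstar, (ρ • ContinuousLinearMap.id ℝ H + V) (fhat - fstar)⟫_ℝ ≤
        Real.sqrt ⟪S, Ring.inverse (ρ • ContinuousLinearMap.id ℝ H + V) S⟫_ℝ +
          Real.sqrt ρ * ‖fstar‖ := by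
  exact ridge_error_decomposition_general hρ f ε fstar
    (fun s ↦ (hY s).trans (by rw [real_inner_comm])) hV hS hfhat
end

section
/- Let H be a real Hilbert space, fix t ≥ 1, ρ > 0, and f_1, …, f_t ∈ H. For 0 ≤ s ≤ t let V_s be the operator g ↦ Σ_{r=1}^s ⟨f_r, g⟩ f_r (with V_0 = 0), and let K_t ∈ ℝ^{t×t} be the Gram matrix (K_t)_{ij} = ⟨f_i, f_j⟩. Then det(I_t + ρ^{-1} K_t) = ∏_{s=1}^t ( 1 + ⟨f_s, (ρ·id_H + V_{s-1})^{-1} f_s⟩ ). -/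
open scoped InnerProductSpace

/-!
Adjoining `v n` borders the matrix `1 + ρ⁻¹ K` by one row and one column. If `x` solves
`(ρ + V n) x = v n`, then pairing this equation with `v 0, …, v n` shows that the new column is the
combination of the old columns with coefficients `⟪v i, x⟫`, plus `1 + ⟪v n, x⟫` in the corner.
Clearing the column multiplies the determinant by `1 + ⟪v n, x⟫`; neither the inverse of
`1 + ρ⁻¹ K` nor that of a rank-one update is needed.
-/

section Determinant

open Matrix

theorem det_fromBlocks_mul_add {m n R : Type*} [CommRing R] [Fintype m] [DecidableEq m]
    [Fintype n] [DecidableEq n] (A : Matrix m m R) (B : Matrix n m R) (C : Matrix m n R)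
    (D : Matrix n n R) :
    (fromBlocks A (A * C) B (B * C + D)).det = A.det * D.det := by
  have factorization :
      fromBlocks A (A * C) B (B * C + D) = fromBlocks A 0 B D * fromBlocks 1 C 0 1 := by
    simp [fromBlocks_multiply]
  simp [factorization]

variable {R M : Type*} [CommRing R] [AddCommGroup M] [Module R M]

/-- The matrix `(φ i (v j))` for `i, j < n`, which is a Gram matrix when `φ i` is the inner product
with `v i`. Functionals and vectors are indexed by `ℕ` so that `n` can vary. -/
def pairingMatrix (φ : ℕ → Module.Dual R M) (v : ℕ → M) (n : ℕ) : Matrix (Fin n) (Fin n) R :=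
  of fun i j => φ i (v j)

theorem det_one_add_pairingMatrix_succ (φ : ℕ → Module.Dual R M) (v : ℕ → M) (n : ℕ) {x : M}
    (hx : x + ∑ i ∈ Finset.range n, φ i x • v i = v n) :
    (1 + pairingMatrix φ v (n + 1)).det = (1 + pairingMatrix φ v n).det * (1 + φ n x) := by
  have apply_v (k : ℕ) : φ k (v n) = φ k x + ∑ j : Fin n, φ k (v j) * φ j x := by
    rw [Fin.sum_univ_eq_sum_range (fun j => φ k (v j) * φ j x), ← hx]
    simp [mul_comm]
  let C : Matrix (Fin n) (Fin 1) R := of fun i _ => φ i x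
  let B : Matrix (Fin 1) (Fin n) R := of fun _ j => φ n (v j)
  have blocks :
      (1 + pairingMatrix φ v (n + 1)).submatrix finSumFinEquiv finSumFinEquiv =
        fromBlocks (1 + pairingMatrix φ v n) ((1 + pairingMatrix φ v n) * C) B
          (B * C + of fun _ _ => 1 + φ n x) := by
    ext (i | i) (j | j)
    · simp [pairingMatrix, one_apply]
    · simp [pairingMatrix, Matrix.add_mul, mul_apply, C, apply_v, Fin.ext_iff, i.2.ne]
    · simp [pairingMatrix, B, Fin.ext_iff, j.2.ne']
    · simp [pairingMatrix, mul_apply, B, C, apply_v, Subsingleton.elim i j, add_left_comm,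
        add_comm (φ n x)]
  rw [← det_submatrix_equiv_self finSumFinEquiv, blocks, det_fromBlocks_mul_add, det_fin_one,
    of_apply]

theorem det_one_add_pairingMatrix (φ : ℕ → Module.Dual R M) (v x : ℕ → M) (t : ℕ)
    (hx : ∀ s < t, x s + ∑ i ∈ Finset.range s, φ i (x s) • v i = v s) :
    (1 + pairingMatrix φ v t).det = ∏ s ∈ Finset.range t, (1 + φ s (x s)) := by
  induction t with
  | zero => simp
  | succ t ih =>
    rw [det_one_add_pairingMatrix_succ φ v t (hx t t.lt_succ_self), Finset.prod_range_succ,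
      ih fun s hs => hx s (hs.trans t.lt_succ_self)]

end Determinant

section Invertibility

theorem surjective_smul_id_add_of_injective {K E : Type*} [Field K] [AddCommGroup E] [Module K E]
    {V : E →ₗ[K] E} (hV : V.HasFiniteRange) {c : K}
    (hinj : Function.Injective (c • LinearMap.id + V : E →ₗ[K] E)) :
    Function.Surjective (c • LinearMap.id + V : E →ₗ[K] E) := by
  intro y
  have : FiniteDimensional K V.range := Module.Finite.iff_fg.2 hV.fg_range
  let W : Submodule K E := V.range ⊔ K ∙ y
  have mapsTo_W : ∀ w ∈ W, (c • LinearMap.id + V : E →ₗ[K] E) w ∈ W := fun w hw =>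
    W.add_mem (W.smul_mem c hw) (Submodule.mem_sup_left (V.mem_range_self w))
  have y_mem_W : y ∈ W := Submodule.mem_sup_right (Submodule.mem_span_singleton_self y)
  obtain ⟨x, -, hx⟩ := (LinearMap.injOn_iff_surjOn mapsTo_W).1 hinj.injOn y_mem_W
  exact ⟨x, hx⟩

theorem isUnit_of_antilipschitzWith_of_surjective {𝕜 E : Type*} [NontriviallyNormedField 𝕜]
    [NormedAddCommGroup E] [NormedSpace 𝕜 E] {T : E →L[𝕜] E} {c : NNReal}
    (hanti : AntilipschitzWith c T) (hsurj : Function.Surjective T) : IsUnit T := by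
  let e : E ≃ₗ[𝕜] E := LinearEquiv.ofBijective T.toLinearMap ⟨hanti.injective, hsurj⟩
  have continuous_symm : Continuous e.symm :=
    (hanti.to_rightInverse e.apply_symm_apply).continuous
  let eL : E ≃L[𝕜] E :=
    { e with continuous_toFun := T.continuous, continuous_invFun := continuous_symm }
  exact ⟨(ContinuousLinearEquiv.unitsEquiv 𝕜 E).symm eL, rfl⟩

theorem isUnit_smul_id_add_of_isPositive {𝕜 H : Type*} [RCLike 𝕜] [NormedAddCommGroup H]
    [InnerProductSpace 𝕜 H] {V : H →L[𝕜] H} (hfin : V.toLinearMap.HasFiniteRange)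
    (hpos : V.IsPositive) {ρ : 𝕜} (hρ : 0 < RCLike.re ρ) :
    IsUnit (ρ • ContinuousLinearMap.id 𝕜 H + V) := by
  have coercive (x : H) :
      ‖x‖ ^ 2 * RCLike.re ρ ≤ ‖⟪(ρ • ContinuousLinearMap.id 𝕜 H + V) x, x⟫_𝕜‖ :=
    calc
      ‖x‖ ^ 2 * RCLike.re ρ ≤ RCLike.re ρ * ‖x‖ ^ 2 + RCLike.re ⟪V x, x⟫_𝕜 := by
        linarith [hpos.re_inner_nonneg_left x]
      _ = RCLike.re ⟪(ρ • ContinuousLinearMap.id 𝕜 H + V) x, x⟫_𝕜 := by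
        simp [inner_add_left, inner_smul_left, ← RCLike.ofReal_pow, -map_pow]
      _ ≤ ‖⟪(ρ • ContinuousLinearMap.id 𝕜 H + V) x, x⟫_𝕜‖ := RCLike.re_le_norm _
  have antilipschitz := ContinuousLinearMap.antilipschitz_of_forall_le_inner_map _
    (c := ⟨RCLike.re ρ, hρ.le⟩) hρ coercive
  exact isUnit_of_antilipschitzWith_of_surjective antilipschitz
    (surjective_smul_id_add_of_injective hfin antilipschitz.injective)

end Invertibility

section CovarianceOperator

open InnerProductSpace

variable (𝕜 : Type*) {H : Type*} [RCLike 𝕜] [SeminormedAddCommGroup H] [InnerProductSpace 𝕜 H]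

/-- The covariance operator `g ↦ ∑ i < n, ⟪v i, g⟫ • v i` of the first `n` vectors of `v`, indexed
from `0`: the paper's `V_s` is `covarianceOperator 𝕜 (fun i => f (i + 1)) s`. -/
noncomputable def covarianceOperator (v : ℕ → H) (n : ℕ) : H →L[𝕜] H :=
  ∑ i ∈ Finset.range n, rankOne 𝕜 (v i) (v i)

theorem covarianceOperator_apply (v : ℕ → H) (n : ℕ) (g : H) :
    covarianceOperator 𝕜 v n g = ∑ i ∈ Finset.range n, ⟪v i, g⟫_𝕜 • v i := by
  simp [covarianceOperator]

theorem hasFiniteRange_covarianceOperator (v : ℕ → H) (n : ℕ) :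
    (covarianceOperator 𝕜 v n).toLinearMap.HasFiniteRange := by
  have : FiniteDimensional 𝕜 (Submodule.span 𝕜 (v '' Finset.range n)) :=
    FiniteDimensional.span_of_finite 𝕜 ((Finset.range n).finite_toSet.image v)
  rw [LinearMap.hasFiniteRange_iff_range, ← Module.Finite.iff_fg]
  refine Submodule.finiteDimensional_of_le (S₂ := Submodule.span 𝕜 (v '' Finset.range n)) ?_
  rintro _ ⟨g, rfl⟩
  rw [ContinuousLinearMap.coe_coe, covarianceOperator_apply]
  exact Submodule.sum_mem _ fun i hi =>
    Submodule.smul_mem _ _ (Submodule.subset_span (Set.mem_image_of_mem v hi))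

theorem isPositive_covarianceOperator {H : Type*} [NormedAddCommGroup H] [InnerProductSpace 𝕜 H]
    (v : ℕ → H) (n : ℕ) : (covarianceOperator 𝕜 v n).IsPositive :=
  ContinuousLinearMap.isPositive_sum _ fun _ _ => isPositive_rankOne_self _

variable {𝕜}

theorem det_one_add_inv_smul_gram {ρ : 𝕜} (hρ : ρ ≠ 0) (v : ℕ → H) (t : ℕ)
    (hunit : ∀ s < t, IsUnit (ρ • ContinuousLinearMap.id 𝕜 H + covarianceOperator 𝕜 v s)) :
    (1 + ρ⁻¹ • Matrix.gram 𝕜 fun i : Fin t => v i).det = ∏ s ∈ Finset.range t,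
      (1 + ⟪v s, Ring.inverse (ρ • ContinuousLinearMap.id 𝕜 H + covarianceOperator 𝕜 v s)
        (v s)⟫_𝕜) := by
  let x (s : ℕ) : H :=
    Ring.inverse (ρ • ContinuousLinearMap.id 𝕜 H + covarianceOperator 𝕜 v s) (v s)
  let φ (i : ℕ) : Module.Dual 𝕜 H := ρ⁻¹ • (innerSL 𝕜 (v i)).toLinearMap
  have φ_smul_x (i s : ℕ) : φ i (ρ • x s) = ⟪v i, x s⟫_𝕜 := by
    simp [φ, hρ]
  have resolvent_equation (s : ℕ) (hs : s < t) :
      ρ • x s + ∑ i ∈ Finset.range s, φ i (ρ • x s) • v i = v s := by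
    simp only [φ_smul_x, ← covarianceOperator_apply]
    exact DFunLike.congr_fun (Ring.mul_inverse_cancel _ (hunit s hs)) (v s)
  have gram_eq : ρ⁻¹ • Matrix.gram 𝕜 (fun i : Fin t => v i) = pairingMatrix φ v t := rfl
  rw [gram_eq, det_one_add_pairingMatrix φ v (fun s => ρ • x s) t resolvent_equation]
  simp only [φ_smul_x, x]

end CovarianceOperator

theorem det_product_identity_general {𝕜 H : Type*} [RCLike 𝕜] [NormedAddCommGroup H]
    [InnerProductSpace 𝕜 H] (t : ℕ) {ρ : 𝕜} (hρ : 0 < RCLike.re ρ) (f : ℕ → H)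
    (V : ℕ → H →L[𝕜] H)
    (hV : ∀ s, V s = ∑ r ∈ Finset.Icc 1 s, (innerSL 𝕜 (f r)).smulRight (f r))
    (K : Matrix (Fin t) (Fin t) 𝕜)
    (hK : ∀ i j : Fin t, K i j = ⟪f (i.1 + 1), f (j.1 + 1)⟫_𝕜) :
    Matrix.det (1 + ρ⁻¹ • K) =
      ∏ s ∈ Finset.Icc 1 t,
        (1 + ⟪f s, Ring.inverse (ρ • ContinuousLinearMap.id 𝕜 H + V (s - 1)) (f s)⟫_𝕜) := by
  let v (i : ℕ) : H := f (i + 1)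
  have V_eq (s : ℕ) : V s = covarianceOperator 𝕜 v s := by
    rw [hV, ← Finset.Ico_add_one_right_eq_Icc, Finset.sum_Ico_eq_sum_range]
    simp only [Nat.add_sub_cancel, Nat.add_comm 1]
    rfl
  have K_eq : K = Matrix.gram 𝕜 fun i : Fin t => v i := Matrix.ext hK
  have ρ_ne_zero : ρ ≠ 0 := fun h => by simp [h] at hρ
  have isUnit_resolvent (s : ℕ) := isUnit_smul_id_add_of_isPositive
    (hasFiniteRange_covarianceOperator 𝕜 v s) (isPositive_covarianceOperator 𝕜 v s) hρ
  rw [K_eq, det_one_add_inv_smul_gram ρ_ne_zero v t fun s _ => isUnit_resolvent s,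
    ← Finset.Ico_add_one_right_eq_Icc, Finset.prod_Ico_eq_prod_range]
  simp only [V_eq, Nat.add_sub_cancel, Nat.add_comm 1, v]

/-- Determinant product identity ("elliptical potential" identity):
`det(I_t + ρ⁻¹ K_t) = ∏_{s=1}^t (1 + ⟨f_s, (ρ·id + V_{s-1})⁻¹ f_s⟩)`, where
`V_s g = Σ_{r=1}^s ⟨f_r, g⟩ f_r` (with `V_0 = 0`) and `(K_t)_{ij} = ⟨f_i, f_j⟩`. -/
theorem det_product_identity
    {H : Type*} [NormedAddCommGroup H] [InnerProductSpace ℝ H] [CompleteSpace H]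
    (t : ℕ) (ht : 1 ≤ t) (ρ : ℝ) (hρ : 0 < ρ) (f : ℕ → H)
    -- partial covariance operators `V_s g = Σ_{r=1}^s ⟨f_r, g⟩ f_r` (so `V 0 = 0`)
    (V : ℕ → H →L[ℝ] H)
    (hV : ∀ s, V s = ∑ r ∈ Finset.Icc 1 s, (innerSL ℝ (f r)).smulRight (f r))
    -- Gram matrix `(K_t)_{ij} = ⟨f_i, f_j⟩`
    (K : Matrix (Fin t) (Fin t) ℝ)
    (hK : ∀ i j : Fin t, K i j = ⟪f (i.1 + 1), f (j.1 + 1)⟫_ℝ) :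
    Matrix.det (1 + ρ⁻¹ • K) =
      ∏ s ∈ Finset.Icc 1 t,
        (1 + ⟪f s, Ring.inverse (ρ • ContinuousLinearMap.id ℝ H + V (s - 1)) (f s)⟫_ℝ) := by
  exact det_product_identity_general t hρ f V hV K hK
end

section
/- Let H be a real Hilbert space, fix t ≥ 1 and f_1, …, f_t ∈ H with ‖f_s‖² ≤ L for all s and some L > 0, and let ρ ≥ max(1, L). For 0 ≤ s ≤ t let V_s be the operator g ↦ Σ_{r=1}^s ⟨f_r, g⟩ f_r (with V_0 = 0), and let K_t be the Gram matrix (K_t)_{ij} = ⟨f_i, f_j⟩. Then Σ_{s=1}^t ⟨f_s, (ρ·id_H + V_{s-1})^{-1} f_s⟩ ≤ 2 log det(I_t + ρ^{-1} K_t). -/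
open scoped InnerProductSpace

/-!
Adjoining a vector `g` to a family `f` borders the matrix `1 + ρ⁻¹ K` by one row and column, and the
Woodbury identity says that the resulting Schur complement is `1 + ⟪g, (ρ + V)⁻¹ g⟫`. Hence
`det (1 + ρ⁻¹ K_t) = ∏_{s ≤ t} (1 + x_s)` with `x_s = ⟪f_s, (ρ + V_{s-1})⁻¹ f_s⟫`. Since `V` is
positive, `0 ≤ x_s ≤ ‖f_s‖² / ρ`, and on `[0, 2]` one has `x ≤ 2 log (1 + x)`.
-/

lemma sum_Icc_one_eq_sum_range {M : Type*} [AddCommMonoid M] (g : ℕ → M) (n : ℕ) :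
    ∑ s ∈ Finset.Icc 1 n, g s = ∑ s ∈ Finset.range n, g (s + 1) := by
  rw [Finset.range_eq_Ico, Finset.sum_Ico_add']
  rfl

lemma le_two_mul_log_one_add {x : ℝ} (hx₀ : 0 ≤ x) (hx₂ : x ≤ 2) :
    x ≤ 2 * Real.log (1 + x) := by
  have h_rational : x ≤ 2 * (2 * x / (x + 2)) := by
    rw [← mul_div_assoc, le_div_iff₀ (by linarith)]
    nlinarith
  linarith [Real.le_log_one_add_of_nonneg hx₀]

section

variable {H : Type*} [NormedAddCommGroup H] [InnerProductSpace ℝ H]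

section PositiveOperator

variable {T : H →L[ℝ] H}

lemma mul_norm_sq_le_inner_smul_id_add (hT : T.IsPositive) (ρ : ℝ) (u : H) :
    ρ * ‖u‖ ^ 2 ≤ ⟪(ρ • ContinuousLinearMap.id ℝ H + T) u, u⟫_ℝ := by
  have h_expand : ⟪(ρ • ContinuousLinearMap.id ℝ H + T) u, u⟫_ℝ = ρ * ‖u‖ ^ 2 + ⟪T u, u⟫_ℝ := by
    simp [inner_add_left, real_inner_smul_left]
  linarith [hT.inner_nonneg_left u]

lemma mul_inner_smul_id_add_le_norm_sq (hT : T.IsPositive) {ρ : ℝ} (hρ : 0 ≤ ρ) (u : H) :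
    ρ * ⟪(ρ • ContinuousLinearMap.id ℝ H + T) u, u⟫_ℝ ≤
      ‖(ρ • ContinuousLinearMap.id ℝ H + T) u‖ ^ 2 := by
  have h_apply : (ρ • ContinuousLinearMap.id ℝ H + T) u = ρ • u + T u := by simp
  rw [h_apply]
  calc ρ * ⟪ρ • u + T u, u⟫_ℝ
      ≤ ρ * ⟪ρ • u + T u, u⟫_ℝ + (ρ * ⟪T u, u⟫_ℝ + ‖T u‖ ^ 2) :=
        le_add_of_nonneg_right <| add_nonneg (mul_nonneg hρ (hT.inner_nonneg_left u)) (sq_nonneg _)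
    _ = ‖ρ • u + T u‖ ^ 2 := by
        rw [← real_inner_self_eq_norm_sq (T u), ← real_inner_self_eq_norm_sq (ρ • u + T u)]
        simp only [inner_add_left, inner_add_right, real_inner_smul_left, real_inner_smul_right,
          real_inner_comm (T u) u]
        ring

end PositiveOperator

section RegularizedGram

variable {ι κ : Type*} [DecidableEq ι] [DecidableEq κ]

/-- The regularized Gram matrix `1 + ρ⁻¹ K` of a finite family `f`, where `K i j = ⟪f i, f j⟫`. -/
noncomputable def regularizedGram (ρ : ℝ) (f : ι → H) : Matrix ι ι ℝ :=
  1 + ρ⁻¹ • Matrix.gram ℝ f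

lemma regularizedGram_posDef [Finite ι] {ρ : ℝ} (hρ : 0 ≤ ρ) (f : ι → H) :
    (regularizedGram ρ f).PosDef :=
  Matrix.PosDef.one.add_posSemidef ((Matrix.posSemidef_gram ℝ f).smul (inv_nonneg.mpr hρ))

lemma det_regularizedGram_comp_equiv [Fintype ι] [Fintype κ] (ρ : ℝ) (f : ι → H) (e : κ ≃ ι) :
    (regularizedGram ρ (f ∘ e)).det = (regularizedGram ρ f).det := by
  rw [← Matrix.det_submatrix_equiv_self e]
  congr 1
  ext i j
  simp [regularizedGram, Matrix.one_apply]

lemma regularizedGram_sumElim (ρ : ℝ) (f : ι → H) (h : κ → H) :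
    regularizedGram ρ (Sum.elim f h) = Matrix.fromBlocks (regularizedGram ρ f)
      (.of fun i j ↦ ρ⁻¹ * ⟪f i, h j⟫_ℝ) (.of fun i j ↦ ρ⁻¹ * ⟪h i, f j⟫_ℝ)
      (regularizedGram ρ h) := by
  ext (i | i) (j | j) <;> simp [regularizedGram, Matrix.one_apply]

end RegularizedGram

variable {ι : Type*} [Fintype ι]

/-- The regularized covariance operator `ρ·id + V` of a finite family `f`, where
`V g = ∑ i, ⟪f i, g⟫ f i`. -/
noncomputable def regularizedCovariance (ρ : ℝ) (f : ι → H) : H →L[ℝ] H :=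
  ρ • ContinuousLinearMap.id ℝ H + ∑ i, InnerProductSpace.rankOne ℝ (f i) (f i)

lemma regularizedCovariance_apply (ρ : ℝ) (f : ι → H) (g : H) :
    regularizedCovariance ρ f g = ρ • g + ∑ i, ⟪f i, g⟫_ℝ • f i := by
  simp [regularizedCovariance]

lemma isPositive_sum_rankOne_self (f : ι → H) :
    (∑ i, InnerProductSpace.rankOne ℝ (f i) (f i)).IsPositive :=
  ContinuousLinearMap.isPositive_sum _ fun _ _ ↦ InnerProductSpace.isPositive_rankOne_self _

lemma regularizedCovariance_injective {ρ : ℝ} (hρ : 0 < ρ) (f : ι → H) :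
    Function.Injective (regularizedCovariance ρ f) := by
  refine (injective_iff_map_eq_zero _).mpr fun u hu ↦ ?_
  have h_coercive : ρ * ‖u‖ ^ 2 ≤ ⟪regularizedCovariance ρ f u, u⟫_ℝ :=
    mul_norm_sq_le_inner_smul_id_add (isPositive_sum_rankOne_self f) ρ u
  rw [hu, inner_zero_left] at h_coercive
  have h_sq : ‖u‖ ^ 2 = 0 := le_antisymm (by nlinarith) (sq_nonneg _)
  simpa using h_sq

section Woodbury

variable [DecidableEq ι]

/-- The coefficients `(1 + ρ⁻¹ K)⁻¹ (ρ⁻¹ ⟪f i, g⟫)_i` of the kernel ridge regression of `g` on the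
family `f`, with penalty `ρ`. -/
noncomputable def ridgeCoeff (ρ : ℝ) (f : ι → H) (g : H) : ι → ℝ :=
  (regularizedGram ρ f)⁻¹.mulVec fun i ↦ ρ⁻¹ * ⟪f i, g⟫_ℝ

lemma ridgeCoeff_normal_equation {ρ : ℝ} (hρ : 0 ≤ ρ) (f : ι → H) (g : H) (i : ι) :
    ridgeCoeff ρ f g i + ρ⁻¹ * ∑ j, ridgeCoeff ρ f g j * ⟪f i, f j⟫_ℝ = ρ⁻¹ * ⟪f i, g⟫_ℝ := by
  have h_solve : (regularizedGram ρ f).mulVec (ridgeCoeff ρ f g) = fun i ↦ ρ⁻¹ * ⟪f i, g⟫_ℝ := by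
    rw [ridgeCoeff, Matrix.mulVec_mulVec, Matrix.mul_nonsing_inv _
      ((regularizedGram_posDef hρ f).det_pos.ne'.isUnit), Matrix.one_mulVec]
  have h_entry := congrFun h_solve i
  rw [regularizedGram, Matrix.add_mulVec, Matrix.one_mulVec, Matrix.smul_mulVec] at h_entry
  simpa [Matrix.mulVec, dotProduct, mul_comm] using h_entry

/-- The Woodbury form `ρ⁻¹ (id - ρ⁻¹ ∑ i j, (1 + ρ⁻¹ K)⁻¹ i j ⟪f j, ·⟫ f i)` of the inverse of the
regularized covariance operator. -/
noncomputable def woodburyInverse (ρ : ℝ) (f : ι → H) : H →L[ℝ] H :=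
  ρ⁻¹ • (ContinuousLinearMap.id ℝ H - ∑ i, ∑ j,
    ((regularizedGram ρ f)⁻¹ i j * ρ⁻¹) • InnerProductSpace.rankOne ℝ (f i) (f j))

lemma woodburyInverse_apply (ρ : ℝ) (f : ι → H) (g : H) :
    woodburyInverse ρ f g = ρ⁻¹ • (g - ∑ i, ridgeCoeff ρ f g i • f i) := by
  simp [woodburyInverse, ridgeCoeff, Matrix.mulVec, dotProduct, Finset.sum_smul, smul_smul,
    mul_assoc]

lemma inner_woodburyInverse {ρ : ℝ} (hρ : 0 ≤ ρ) (f : ι → H) (g : H) (i : ι) :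
    ⟪f i, woodburyInverse ρ f g⟫_ℝ = ridgeCoeff ρ f g i := by
  have h_normal := ridgeCoeff_normal_equation hρ f g i
  simp only [woodburyInverse_apply, real_inner_smul_right, inner_sub_right, inner_sum]
  linarith

lemma regularizedCovariance_woodburyInverse {ρ : ℝ} (hρ : 0 < ρ) (f : ι → H) (g : H) :
    regularizedCovariance ρ f (woodburyInverse ρ f g) = g := by
  simp only [regularizedCovariance_apply, inner_woodburyInverse hρ.le]
  rw [woodburyInverse_apply, smul_inv_smul₀ hρ.ne', sub_add_cancel]

lemma inverse_regularizedCovariance {ρ : ℝ} (hρ : 0 < ρ) (f : ι → H) :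
    Ring.inverse (regularizedCovariance ρ f) = woodburyInverse ρ f := by
  have h_right : regularizedCovariance ρ f * woodburyInverse ρ f = 1 :=
    ContinuousLinearMap.ext (regularizedCovariance_woodburyInverse hρ f)
  have h_left : woodburyInverse ρ f * regularizedCovariance ρ f = 1 :=
    ContinuousLinearMap.ext fun u ↦ regularizedCovariance_injective hρ f
      (regularizedCovariance_woodburyInverse hρ f _)
  exact Ring.inverse_unit ⟨_, _, h_right, h_left⟩

end Woodbury

lemma regularizedCovariance_inverse_apply {ρ : ℝ} (hρ : 0 < ρ) (f : ι → H) (g : H) :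
    regularizedCovariance ρ f (Ring.inverse (regularizedCovariance ρ f) g) = g := by
  classical
  rw [inverse_regularizedCovariance hρ, regularizedCovariance_woodburyInverse hρ]

lemma inner_inverse_regularizedCovariance_nonneg {ρ : ℝ} (hρ : 0 < ρ) (f : ι → H) (g : H) :
    0 ≤ ⟪g, Ring.inverse (regularizedCovariance ρ f) g⟫_ℝ := by
  set u := Ring.inverse (regularizedCovariance ρ f) g
  have hu : regularizedCovariance ρ f u = g := regularizedCovariance_inverse_apply hρ f g
  calc 0 ≤ ρ * ‖u‖ ^ 2 := by positivity
    _ ≤ ⟪regularizedCovariance ρ f u, u⟫_ℝ :=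
        mul_norm_sq_le_inner_smul_id_add (isPositive_sum_rankOne_self f) ρ u
    _ = ⟪g, u⟫_ℝ := by rw [hu]

lemma inner_inverse_regularizedCovariance_le {ρ : ℝ} (hρ : 0 < ρ) (f : ι → H) (g : H) :
    ⟪g, Ring.inverse (regularizedCovariance ρ f) g⟫_ℝ ≤ ‖g‖ ^ 2 / ρ := by
  set u := Ring.inverse (regularizedCovariance ρ f) g
  have hu : regularizedCovariance ρ f u = g := regularizedCovariance_inverse_apply hρ f g
  rw [le_div_iff₀' hρ]
  calc ρ * ⟪g, u⟫_ℝ = ρ * ⟪regularizedCovariance ρ f u, u⟫_ℝ := by rw [hu]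
    _ ≤ ‖regularizedCovariance ρ f u‖ ^ 2 :=
        mul_inner_smul_id_add_le_norm_sq (isPositive_sum_rankOne_self f) hρ.le u
    _ = ‖g‖ ^ 2 := by rw [hu]

lemma det_regularizedGram_sumElim_const [DecidableEq ι] {κ : Type*} [Fintype κ] [DecidableEq κ]
    [Unique κ] {ρ : ℝ} (hρ : 0 < ρ) (f : ι → H) (g : H) :
    (regularizedGram ρ (Sum.elim f fun _ : κ ↦ g)).det =
      (regularizedGram ρ f).det * (1 + ⟪g, Ring.inverse (regularizedCovariance ρ f) g⟫_ℝ) := by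
  have := (regularizedGram_posDef hρ.le f).isUnit.invertible
  rw [regularizedGram_sumElim, Matrix.det_fromBlocks₁₁, Matrix.invOf_eq_nonsing_inv,
    Matrix.mul_assoc, Matrix.det_unique (n := κ), Matrix.sub_apply]
  congr 1
  have h_schur :
      ((.of fun _ i ↦ ρ⁻¹ * ⟪g, f i⟫_ℝ : Matrix κ ι ℝ) * ((regularizedGram ρ f)⁻¹ *
        (.of fun i _ ↦ ρ⁻¹ * ⟪f i, g⟫_ℝ : Matrix ι κ ℝ))) default default =
        ρ⁻¹ * ∑ i, ridgeCoeff ρ f g i * ⟪g, f i⟫_ℝ := by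
    rw [Matrix.mul_apply, Finset.mul_sum]
    refine Finset.sum_congr rfl fun i _ ↦ ?_
    rw [Matrix.of_apply, mul_assoc, mul_comm ⟪g, f i⟫_ℝ]
    rfl
  rw [h_schur, inverse_regularizedCovariance hρ, woodburyInverse_apply]
  simp only [regularizedGram, Matrix.add_apply, Matrix.one_apply_eq, Matrix.smul_apply,
    Matrix.gram_apply, smul_eq_mul, real_inner_smul_right, inner_sub_right, inner_sum]
  ring

lemma det_regularizedGram_succ {ρ : ℝ} (hρ : 0 < ρ) (f : ℕ → H) (n : ℕ) :
    (regularizedGram ρ fun i : Fin (n + 1) ↦ f i).det =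
      (regularizedGram ρ fun i : Fin n ↦ f i).det *
        (1 + ⟪f n, Ring.inverse (regularizedCovariance ρ fun i : Fin n ↦ f i) (f n)⟫_ℝ) := by
  have h_split : (fun i : Fin (n + 1) ↦ f i) ∘ finSumFinEquiv =
      Sum.elim (fun i : Fin n ↦ f i) fun _ : Fin 1 ↦ f n := by
    ext (i | i) <;> simp
  rw [← det_regularizedGram_comp_equiv ρ _ finSumFinEquiv, h_split,
    det_regularizedGram_sumElim_const hρ]

theorem det_regularizedGram_eq_prod {ρ : ℝ} (hρ : 0 < ρ) (f : ℕ → H) (n : ℕ) :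
    (regularizedGram ρ fun i : Fin n ↦ f i).det = ∏ s ∈ Finset.range n,
      (1 + ⟪f s, Ring.inverse (regularizedCovariance ρ fun i : Fin s ↦ f i) (f s)⟫_ℝ) := by
  induction n with
  | zero => simp
  | succ n ih => rw [det_regularizedGram_succ hρ, ih, Finset.prod_range_succ]

theorem sum_inner_inverse_regularizedCovariance_le {ρ : ℝ} (hρ : 0 < ρ) (f : ℕ → H) (n : ℕ)
    (hf : ∀ s < n, ‖f s‖ ^ 2 ≤ 2 * ρ) :
    ∑ s ∈ Finset.range n,
        ⟪f s, Ring.inverse (regularizedCovariance ρ fun i : Fin s ↦ f i) (f s)⟫_ℝ ≤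
      2 * Real.log (regularizedGram ρ fun i : Fin n ↦ f i).det := by
  have h_nonneg (s : ℕ) := inner_inverse_regularizedCovariance_nonneg hρ (fun i : Fin s ↦ f i) (f s)
  rw [det_regularizedGram_eq_prod hρ,
    Real.log_prod fun s _ ↦ (add_pos_of_pos_of_nonneg one_pos (h_nonneg s)).ne', Finset.mul_sum]
  refine Finset.sum_le_sum fun s hs ↦ le_two_mul_log_one_add (h_nonneg s) ?_
  exact (inner_inverse_regularizedCovariance_le hρ _ _).trans
    ((div_le_iff₀ hρ).mpr (hf s (Finset.mem_range.mp hs)))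

end

theorem elliptical_potential_bound_general
    {H : Type*} [NormedAddCommGroup H] [InnerProductSpace ℝ H] (t : ℕ) (f : ℕ → H)
    (ρ : ℝ) (hρ : 0 < ρ) (hf : ∀ s ∈ Finset.Icc 1 t, ‖f s‖ ^ 2 ≤ 2 * ρ)
    (V : ℕ → H →L[ℝ] H)
    (hV : ∀ s, V s = ∑ r ∈ Finset.Icc 1 s, (innerSL ℝ (f r)).smulRight (f r))
    (K : Matrix (Fin t) (Fin t) ℝ)
    (hK : ∀ i j : Fin t, K i j = ⟪f (i.1 + 1), f (j.1 + 1)⟫_ℝ) :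
    ∑ s ∈ Finset.Icc 1 t,
        ⟪f s, Ring.inverse (ρ • ContinuousLinearMap.id ℝ H + V (s - 1)) (f s)⟫_ℝ ≤
      2 * Real.log (Matrix.det (1 + ρ⁻¹ • K)) := by
  have h_gram : 1 + ρ⁻¹ • K = regularizedGram ρ fun i : Fin t ↦ f (i + 1) := by
    rw [regularizedGram, show K = Matrix.gram ℝ _ from Matrix.ext hK]
  have h_covariance (s : ℕ) : ρ • ContinuousLinearMap.id ℝ H + V s =
      regularizedCovariance ρ fun i : Fin s ↦ f (i + 1) := by
    rw [hV, regularizedCovariance, sum_Icc_one_eq_sum_range,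
      Fin.sum_univ_eq_sum_range fun i ↦ InnerProductSpace.rankOne ℝ (f (i + 1)) (f (i + 1))]
    rfl
  rw [h_gram, sum_Icc_one_eq_sum_range]
  simp only [h_covariance, Nat.add_sub_cancel]
  exact sum_inner_inverse_regularizedCovariance_le hρ (fun s ↦ f (s + 1)) t fun s hs ↦
    hf _ (Finset.mem_Icc.mpr ⟨s.succ_pos, hs⟩)

/-- Elliptical potential bound: if `‖f_s‖² ≤ L` for all `s` and
`ρ ≥ max 1 L`, then
`Σ_{s=1}^t ⟨f_s, (ρ·id + V_{s-1})⁻¹ f_s⟩ ≤ 2 log det(I_t + ρ⁻¹ K_t)`. -/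
theorem elliptical_potential_bound
    {H : Type*} [NormedAddCommGroup H] [InnerProductSpace ℝ H] [CompleteSpace H]
    (t : ℕ) (ht : 1 ≤ t) (L : ℝ) (hL : 0 < L) (f : ℕ → H)
    (hf : ∀ s ∈ Finset.Icc 1 t, ‖f s‖ ^ 2 ≤ L)
    (ρ : ℝ) (hρ : max 1 L ≤ ρ)
    -- partial covariance operators `V_s g = Σ_{r=1}^s ⟨f_r, g⟩ f_r` (so `V 0 = 0`)
    (V : ℕ → H →L[ℝ] H)
    (hV : ∀ s, V s = ∑ r ∈ Finset.Icc 1 s, (innerSL ℝ (f r)).smulRight (f r))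
    -- Gram matrix `(K_t)_{ij} = ⟨f_i, f_j⟩`
    (K : Matrix (Fin t) (Fin t) ℝ)
    (hK : ∀ i j : Fin t, K i j = ⟪f (i.1 + 1), f (j.1 + 1)⟫_ℝ) :
    ∑ s ∈ Finset.Icc 1 t,
        ⟪f s, Ring.inverse (ρ • ContinuousLinearMap.id ℝ H + V (s - 1)) (f s)⟫_ℝ ≤
      2 * Real.log (Matrix.det (1 + ρ⁻¹ • K)) := by
  have hLρ : L ≤ ρ := (le_max_right _ _).trans hρ
  exact elliptical_potential_bound_general t f ρ (hL.trans_le hLρ)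
    (fun s hs ↦ by linarith [hf s hs]) V hV K hK
end

section
/- Let H be a real Hilbert space, let A : H → H be a positive, self-adjoint, boundedly invertible bounded operator, and let g, h, f*, φ ∈ H and U ≥ 0 satisfy ⟨g − h, A(g − h)⟩ ≤ U² and ⟨h − f*, A(h − f*)⟩ ≤ U². Then ⟨g − f*, φ⟩ ≤ 2U ⟨φ, A^{-1} φ⟩^{1/2}. Consequently, in the GP-UCB analysis with A = ρ·id_H + V_{t-1}, g = f̃_t (the optimistic function), h = f_{t-1} (the ridge estimate), and φ = k(·, X_t), the instantaneous regret r_t = f*(x*) − f*(X_t) satisfies r_t ≤ 2U_{t-1} ⟨φ, A^{-1}φ⟩^{1/2} whenever optimism f*(x*) ≤ ⟨f̃_t, φ⟩ holds. -/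
open scoped InnerProductSpace

/-! The form `B x y = ⟪x, A y⟫` is positive semidefinite, so Cauchy–Schwarz holds for it. Writing
`φ = A ψ` with `ψ = A⁻¹ φ` turns `⟪x, φ⟫` into `B x ψ` and `⟪φ, A⁻¹ φ⟫` into `B ψ ψ`; splitting
`g - f* = (g - h) + (h - f*)`, each summand pairs with `φ` to at most `U √⟪φ, A⁻¹ φ⟫`. -/

section BilinForm

variable {M : Type*} [AddCommGroup M] [Module ℝ M] {B : LinearMap.BilinForm ℝ M}

theorem apply_le_sqrt_mul_sqrt_of_isPosSemidef (hB : B.IsPosSemidef) (x y : M) :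
    B x y ≤ √(B x x) * √(B y y) := by
  have hsymm : LinearMap.IsSymm B := LinearMap.BilinForm.isSymm_iff.mp hB.isSymm
  rw [← Real.sqrt_mul (hB.nonneg x)]
  exact Real.le_sqrt_of_sq_le (B.apply_sq_le_of_symm hB.nonneg hsymm x y)

theorem apply_le_mul_sqrt_of_apply_self_le_sq (hB : B.IsPosSemidef) {x : M} {r : ℝ}
    (hr : 0 ≤ r) (hx : B x x ≤ r ^ 2) (y : M) : B x y ≤ r * √(B y y) :=
  (apply_le_sqrt_mul_sqrt_of_isPosSemidef hB x y).trans <|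
    mul_le_mul_of_nonneg_right (Real.sqrt_le_iff.mpr ⟨hr, hx⟩) (Real.sqrt_nonneg _)

theorem apply_sub_le_add_mul_sqrt (hB : B.IsPosSemidef) {x y z : M} {r s : ℝ}
    (hr : 0 ≤ r) (hs : 0 ≤ s) (hxy : B (x - y) (x - y) ≤ r ^ 2)
    (hyz : B (y - z) (y - z) ≤ s ^ 2) (w : M) :
    B (x - z) w ≤ (r + s) * √(B w w) :=
  calc B (x - z) w = B (x - y) w + B (y - z) w := by
        rw [← LinearMap.add_apply, ← map_add, sub_add_sub_cancel]
    _ ≤ r * √(B w w) + s * √(B w w) :=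
        add_le_add (apply_le_mul_sqrt_of_apply_self_le_sq hB hr hxy w)
          (apply_le_mul_sqrt_of_apply_self_le_sq hB hs hyz w)
    _ = (r + s) * √(B w w) := (add_mul _ _ _).symm

end BilinForm

section Operator

variable {H : Type*} [SeminormedAddCommGroup H] [InnerProductSpace ℝ H]

theorem isPosSemidef_innerₗ_compl₂ {A : H →ₗ[ℝ] H} (hA_sa : A.IsSymmetric)
    (hA_pos : ∀ x, 0 ≤ ⟪x, A x⟫_ℝ) :
    LinearMap.BilinForm.IsPosSemidef ((innerₗ H).compl₂ A) where
  eq x y := (real_inner_comm _ _).trans (hA_sa y x)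
  nonneg := hA_pos

theorem instantaneous_regret_bound_general (A : H →ₗ[ℝ] H)
    (hA_pos : ∀ x, 0 ≤ ⟪x, A x⟫_ℝ) (hA_sa : A.IsSymmetric)
    {g h fstar φ ψ : H} (hψ : A ψ = φ) {U : ℝ} (hU : 0 ≤ U)
    (h1 : ⟪g - h, A (g - h)⟫_ℝ ≤ U ^ 2)
    (h2 : ⟪h - fstar, A (h - fstar)⟫_ℝ ≤ U ^ 2) :
    ⟪g - fstar, φ⟫_ℝ ≤ 2 * U * √⟪φ, ψ⟫_ℝ := by
  subst hψ
  rw [two_mul, real_inner_comm ψ]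
  exact apply_sub_le_add_mul_sqrt (isPosSemidef_innerₗ_compl₂ hA_sa hA_pos) hU hU h1 h2 ψ

end Operator

/-- Instantaneous-regret bound from two ellipsoid memberships: if `A` is a
positive, self-adjoint, boundedly invertible bounded operator and
`⟨g − h, A(g − h)⟩ ≤ U²`, `⟨h − f*, A(h − f*)⟩ ≤ U²`, then
`⟨g − f*, φ⟩ ≤ 2U ⟨φ, A⁻¹φ⟩^{1/2}`. (In the GP-UCB analysis, with
`A = ρ·id + V_{t-1}`, `g = f̃_t`, `h = f_{t-1}`, `φ = k(·, X_t)`, this bounds the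
instantaneous regret on the optimism event.) -/
theorem instantaneous_regret_bound
    {H : Type*} [NormedAddCommGroup H] [InnerProductSpace ℝ H] [CompleteSpace H]
    (A : H →L[ℝ] H)
    (hA_pos : ∀ x : H, 0 ≤ ⟪x, A x⟫_ℝ)
    (hA_sa : ∀ x y : H, ⟪A x, y⟫_ℝ = ⟪x, A y⟫_ℝ)
    (hA_inv : IsUnit A)
    (g h fstar φ : H) (U : ℝ) (hU : 0 ≤ U)
    (h1 : ⟪g - h, A (g - h)⟫_ℝ ≤ U ^ 2)
    (h2 : ⟪h - fstar, A (h - fstar)⟫_ℝ ≤ U ^ 2) :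
    ⟪g - fstar, φ⟫_ℝ ≤ 2 * U * Real.sqrt ⟪φ, Ring.inverse A φ⟫_ℝ :=
  instantaneous_regret_bound_general A.toLinearMap hA_pos hA_sa
    (DFunLike.congr_fun (Ring.mul_inverse_cancel A hA_inv) φ) hU h1 h2
end
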